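/- (Chang) Let A be a finite set of nonzero rational numbers, let K be a positive integer with |AA| ≤ K|A|, and let k ≥ 2 be an integer. Then the k-fold sumset satisfies |kA| ≥ |A|^k / (2k^2 - k)^{kK}. -/

import Mathlib

/-!
Call a `2k`-tuple from `A` balanced if its first half and its second half have the same sum, and
let `E(A)` be the number of balanced tuples. Cauchy–Schwarz gives `|A|^(2k) ≤ |kA| E(A)`, so it is
enough to show `E(A)^(1/k) ≤ (2k choose 2)^K |A|`.

* `E(A)^(1/2k)` is the `L^(2k)` norm of an exponential sum, so Hölder's inequality bounds the
  number of balanced tuples from sets `B₁, …, B₂ₖ` by `∏ E(Bᵢ)^(1/2k)`.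
* For a prime `p`, two entries of a balanced tuple share the minimal `p`-adic valuation. Choosing
  the two positions and splitting `A` into its `p`-adic level sets `Aⱼ` gives
  `E(A)^(1/k) ≤ (2k choose 2) ∑ E(Aⱼ)^(1/k)`. If `p` separates points of `A`, every `Aⱼ` has smaller
  multiplicative rank than `A`, and iterating bounds `E(A)^(1/k)` by `2 (2k choose 2)^d |A|` when
  `A` has rank `d`.
* Freiman's lemma in the multiplicative group shows that `|AA| ≤ K|A|` forces `d < K`, unless `A` is
  so small that the trivial bound `E(A) ≤ |A|^(2k)` is good enough.
-/

open Finset Pointwise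

/-- The `k`-fold sumset of a finite set `A` of rationals:
`kA = {a₁ + ⋯ + a_k : aᵢ ∈ A}`. -/
def kfoldSum (k : ℕ) (A : Finset ℚ) : Finset ℚ :=
  (Fintype.piFinset fun _ : Fin k => A).image fun f => ∑ i, f i

section Energy

variable {M : Type*} [AddCommMonoid M] [DecidableEq M]

/-- The tuples with `i`-th entry in `B i` whose first `k` entries have the same sum as the last `k`,
the two halves being indexed by the two summands of `Fin k ⊕ Fin k`. -/
def balancedTuples {k : ℕ} (B : Fin k ⊕ Fin k → Finset M) : Finset (Fin k ⊕ Fin k → M) :=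
  {x ∈ Fintype.piFinset B | ∑ i, x (.inl i) = ∑ i, x (.inr i)}

lemma balancedTuples_mono {k : ℕ} {B C : Fin k ⊕ Fin k → Finset M} (h : ∀ i, B i ⊆ C i) :
    balancedTuples B ⊆ balancedTuples C :=
  filter_subset_filter _ (Fintype.piFinset_subset _ _ h)

/-- The additive energy of order `k` of `A`: the number of solutions in `A` of
`a₁ + ⋯ + aₖ = b₁ + ⋯ + bₖ`. -/
def energy (k : ℕ) (A : Finset M) : ℕ := #(balancedTuples fun _ : Fin k ⊕ Fin k => A)

lemma energy_le_card_sq_pow (k : ℕ) (A : Finset M) : energy k A ≤ (#A ^ 2) ^ k :=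
  (card_filter_le _ _).trans_eq (by simp [← pow_mul, two_mul])

lemma card_sq_le_card_image_mul_card_filter {α β : Type*} [DecidableEq β] (s : Finset α)
    (f : α → β) : #s ^ 2 ≤ #(s.image f) * #{x ∈ s ×ˢ s | f x.1 = f x.2} := by
  classical
  have hfiber (b : β) : {x ∈ {x ∈ s ×ˢ s | f x.1 = f x.2} | f x.1 = b} =
      {a ∈ s | f a = b} ×ˢ {a ∈ s | f a = b} := by
    ext x
    simp only [mem_filter, mem_product]
    grind
  have hmaps : Set.MapsTo (fun x : α × α => f x.1)
      ({x ∈ s ×ˢ s | f x.1 = f x.2} : Finset (α × α)) (s.image f) := fun x hx =>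
    mem_image_of_mem f (mem_product.mp (mem_filter.mp hx).1).1
  calc #s ^ 2 = (∑ b ∈ s.image f, #{a ∈ s | f a = b}) ^ 2 := by rw [← card_eq_sum_card_image]
    _ ≤ #(s.image f) * ∑ b ∈ s.image f, #{a ∈ s | f a = b} ^ 2 := sq_sum_le_card_mul_sum_sq
    _ = _ := by
      simp only [card_eq_sum_card_fiberwise hmaps, hfiber, card_product, sq]

lemma card_pow_sq_le_card_image_sum_mul_energy (k : ℕ) (A : Finset M) :
    (#A ^ k) ^ 2 ≤
      #((Fintype.piFinset fun _ : Fin k => A).image fun x => ∑ i, x i) * energy k A := by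
  have := card_sq_le_card_image_mul_card_filter (Fintype.piFinset fun _ : Fin k => A)
    fun x => ∑ i, x i
  rw [Fintype.card_piFinset_const] at this
  refine this.trans_eq ?_
  congr 1
  refine card_equiv (Equiv.sumArrowEquivProdArrow _ _ _).symm ?_
  simp [balancedTuples, Equiv.sumArrowEquivProdArrow]

/-- The `k`-th root of the energy, i.e. the square of the `L²ᵏ` norm of the exponential sum of `A`.
For `k = 0` it has the junk value `1`. -/
noncomputable def energyNorm (k : ℕ) (A : Finset M) : ℝ := (energy k A : ℝ) ^ (k : ℝ)⁻¹

lemma energyNorm_nonneg (k : ℕ) (A : Finset M) : 0 ≤ energyNorm k A := by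
  unfold energyNorm
  positivity

lemma energyNorm_pow {k : ℕ} (hk : k ≠ 0) (A : Finset M) : energyNorm k A ^ k = energy k A :=
  Real.rpow_inv_natCast_pow (Nat.cast_nonneg _) hk

lemma energyNorm_le_card_sq {k : ℕ} (hk : k ≠ 0) (A : Finset M) :
    energyNorm k A ≤ (#A : ℝ) ^ 2 := by
  rw [← pow_le_pow_iff_left₀ (energyNorm_nonneg k A) (by positivity) hk, energyNorm_pow hk]
  exact_mod_cast energy_le_card_sq_pow k A

lemma energyNorm_le_mul_card {k : ℕ} (hk : k ≠ 0) {A : Finset M} {n : ℝ} (hn : #A ≤ n) :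
    energyNorm k A ≤ n * #A :=
  (energyNorm_le_card_sq hk A).trans <| by rw [sq]; gcongr

end Energy

section Holder

open MeasureTheory ENNReal

variable {Z : Type*} [AddCommGroup Z]

lemma exists_addMonoidHom_unitAddCircle_ne_zero {z : Z} (hz : z ≠ 0) :
    ∃ f : Z →+ UnitAddCircle, f z ≠ 0 := by
  let ι : AddCircle (1 : ℚ) →+ UnitAddCircle :=
    QuotientAddGroup.map _ _ (Rat.castHom ℝ).toAddMonoidHom (by
      rw [AddSubgroup.zmultiples_le]; exact ⟨1, by simp⟩)
  have hι : Function.Injective ι := by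
    rw [injective_iff_map_eq_zero]
    intro q hq
    induction q using QuotientAddGroup.induction_on with | H q =>
    obtain ⟨n, hn⟩ := (QuotientAddGroup.eq_zero_iff _).mp hq
    refine (QuotientAddGroup.eq_zero_iff _).mpr ⟨n, ?_⟩
    have hnq : (n : ℝ) = q := by simpa using hn
    simpa using mod_cast hnq
  obtain ⟨c, hc⟩ := CharacterModule.exists_character_apply_ne_zero_of_ne_zero hz
  exact ⟨ι.comp c, fun h => hc (hι (h.trans (map_zero ι).symm))⟩

section Fourier

variable [TopologicalSpace Z]

/-- The exponential sum of a finite set `B`, a function on the dual group. The dual is taken of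
`Multiplicative Z` because `PontryaginDual` expects a multiplicative group. -/
noncomputable def expSum (B : Finset Z) (χ : PontryaginDual (Multiplicative Z)) : ℂ :=
  ∑ b ∈ B, (χ (.ofAdd b) : ℂ)

lemma continuous_pontryaginDual_apply (z : Z) :
    Continuous fun χ : PontryaginDual (Multiplicative Z) => (χ (.ofAdd z) : ℂ) :=
  continuous_induced_dom.comp <|
    ContinuousEvalConst.continuous_eval_const (F := Multiplicative Z →ₜ* Circle) _

lemma continuous_expSum (B : Finset Z) : Continuous (expSum B) :=
  continuous_finsetSum _ fun b _ => continuous_pontryaginDual_apply b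

variable [DiscreteTopology Z]

lemma exists_pontryaginDual_apply_ne_one {z : Z} (hz : z ≠ 0) :
    ∃ χ : PontryaginDual (Multiplicative Z), χ (.ofAdd z) ≠ 1 := by
  obtain ⟨f, hf⟩ := exists_addMonoidHom_unitAddCircle_ne_zero hz
  refine ⟨⟨(AddCircle.toCircle_addChar.toAddMonoidHom.comp f).toMultiplicativeLeft,
    continuous_of_discreteTopology⟩, fun h => hf (AddCircle.injective_toCircle one_ne_zero ?_)⟩
  rw [AddCircle.toCircle_zero]
  exact h

variable [DecidableEq Z] [MeasurableSpace (PontryaginDual (Multiplicative Z))]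
  [BorelSpace (PontryaginDual (Multiplicative Z))]
  (μ : Measure (PontryaginDual (Multiplicative Z))) [IsProbabilityMeasure μ]
  [μ.IsMulLeftInvariant]

lemma integral_pontryaginDual_apply (z : Z) :
    ∫ χ, (χ (.ofAdd z) : ℂ) ∂μ = if z = 0 then 1 else 0 := by
  split_ifs with hz
  · simp [hz]
  obtain ⟨ψ, hψ⟩ := exists_pontryaginDual_apply_ne_one hz
  have hshift : (ψ (.ofAdd z) : ℂ) * ∫ χ, (χ (.ofAdd z) : ℂ) ∂μ = ∫ χ, (χ (.ofAdd z) : ℂ) ∂μ := by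
    rw [← integral_const_mul]
    exact integral_mul_left_eq_self (μ := μ) (fun χ => (χ (.ofAdd z) : ℂ)) ψ
  by_contra h0
  exact hψ (Circle.ext ((mul_eq_right₀ h0).mp hshift))

lemma integral_prod_expSum {k : ℕ} (B : Fin k ⊕ Fin k → Finset Z) :
    ∫ χ, (∏ i, expSum (B (.inl i)) χ) * ∏ i, starRingEnd ℂ (expSum (B (.inr i)) χ) ∂μ =
      #(balancedTuples B) := by
  have expand (χ : PontryaginDual (Multiplicative Z)) :
      (∏ i, expSum (B (.inl i)) χ) * ∏ i, starRingEnd ℂ (expSum (B (.inr i)) χ) =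
        ∑ x ∈ Fintype.piFinset B, (χ (.ofAdd (∑ i, x (.inl i) - ∑ i, x (.inr i))) : ℂ) := by
    let c : Fin k ⊕ Fin k → Z → Circle :=
      Sum.elim (fun _ b => χ (.ofAdd b)) fun _ b => (χ (.ofAdd b))⁻¹
    calc _ = ∏ i, ∑ b ∈ B i, (c i b : ℂ) := by
          simp [c, expSum, Fintype.prod_sum_type, ← Circle.coe_inv_eq_conj]
      _ = ∑ x ∈ Fintype.piFinset B, ∏ i, Circle.coeHom (c i (x i)) := prod_univ_sum ..
      _ = _ := sum_congr rfl fun x _ => by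
        have hc : ∏ i, c i (x i) = χ (.ofAdd (∑ i, x (.inl i) - ∑ i, x (.inr i))) := by
          simp [c, Fintype.prod_sum_type, ofAdd_sub, ofAdd_sum, div_eq_mul_inv]
        exact (map_prod Circle.coeHom _ _).symm.trans (congrArg _ hc)
  simp_rw [expand]
  rw [integral_finsetSum _ fun x _ =>
    (continuous_pontryaginDual_apply _).integrable_of_hasCompactSupport (.of_compactSpace _)]
  simp only [integral_pontryaginDual_apply, sub_eq_zero]
  simp [balancedTuples]

lemma card_balancedTuples_le_lintegral {k : ℕ} (B : Fin k ⊕ Fin k → Finset Z) :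
    (#(balancedTuples B) : ℝ≥0∞) ≤ ∫⁻ χ, ∏ i, ‖expSum (B i) χ‖ₑ ∂μ := by
  calc (#(balancedTuples B) : ℝ≥0∞) = ‖(#(balancedTuples B) : ℂ)‖ₑ := by simp [← ofReal_norm]
    _ ≤ _ := by
        rw [← integral_prod_expSum μ]
        exact enorm_integral_le_lintegral_enorm _
    _ = _ := lintegral_congr fun χ => by
        simp [Fintype.prod_sum_type, ← ofReal_norm, ENNReal.ofReal_mul, prod_nonneg,
          ENNReal.ofReal_prod_of_nonneg]

lemma lintegral_enorm_expSum_pow (k : ℕ) (A : Finset Z) :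
    ∫⁻ χ, ‖expSum A χ‖ₑ ^ (2 * k) ∂μ = energy k A := by
  have hint : ∫ χ, ‖expSum A χ‖ ^ (2 * k) ∂μ = energy k A := by
    rw [energy, ← Complex.ofReal_inj, ← integral_complex_ofReal]
    push_cast
    rw [← integral_prod_expSum μ]
    simp [← mul_pow, Complex.mul_conj', pow_mul]
  rw [← ENNReal.ofReal_natCast, ← hint, ofReal_integral_eq_lintegral_ofReal]
  · simp [ENNReal.ofReal_pow]
  · exact ((continuous_expSum A).norm.pow _).integrable_of_hasCompactSupport (.of_compactSpace _)
  · exact .of_forall fun χ => by positivity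

end Fourier

lemma card_balancedTuples_pow_le_prod_energy [DecidableEq Z] {k : ℕ}
    (B : Fin k ⊕ Fin k → Finset Z) : #(balancedTuples B) ^ (2 * k) ≤ ∏ i, energy k (B i) := by
  rcases eq_or_ne k 0 with rfl | hk
  · simp
  have hk2 : 2 * k ≠ 0 := by omega
  let : TopologicalSpace Z := ⊥
  have : DiscreteTopology Z := ⟨rfl⟩
  borelize (PontryaginDual (Multiplicative Z))
  let μ : Measure (PontryaginDual (Multiplicative Z)) := Measure.haarMeasure ⊤
  have : IsProbabilityMeasure μ := ⟨Measure.haarMeasure_self⟩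
  have hölder : (#(balancedTuples B) : ℝ≥0∞) ≤
      ∏ i, (energy k (B i) : ℝ≥0∞) ^ (↑(2 * k) : ℝ)⁻¹ := by
    calc (#(balancedTuples B) : ℝ≥0∞)
        ≤ ∫⁻ χ, ∏ i, ‖expSum (B i) χ‖ₑ ∂μ := card_balancedTuples_le_lintegral μ B
      _ = ∫⁻ χ, ∏ i, (‖expSum (B i) χ‖ₑ ^ (2 * k)) ^ (↑(2 * k) : ℝ)⁻¹ ∂μ := by
        simp only [ENNReal.pow_rpow_inv_natCast hk2]
      _ ≤ ∏ i, (∫⁻ χ, ‖expSum (B i) χ‖ₑ ^ (2 * k) ∂μ) ^ (↑(2 * k) : ℝ)⁻¹ :=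
        ENNReal.lintegral_prod_norm_pow_le _
          (fun i _ => ((continuous_expSum (B i)).enorm.measurable.pow_const _).aemeasurable)
          (by simp [← two_mul]; field_simp) fun _ _ => by positivity
      _ = _ := by simp only [lintegral_enorm_expSum_pow]
  have hpow : (#(balancedTuples B) : ℝ≥0∞) ^ (2 * k) ≤ _ := pow_le_pow_left₀ zero_le hölder _
  simp only [← Finset.prod_pow, ENNReal.rpow_inv_natCast_pow hk2] at hpow
  exact_mod_cast hpow

variable [DecidableEq Z]

lemma card_balancedTuples_sq_le_prod_energyNorm {k : ℕ} (hk : k ≠ 0)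
    (B : Fin k ⊕ Fin k → Finset Z) :
    (#(balancedTuples B) : ℝ) ^ 2 ≤ ∏ i, energyNorm k (B i) := by
  rw [← pow_le_pow_iff_left₀ (by positivity) (prod_nonneg fun i _ => energyNorm_nonneg k _) hk,
    ← pow_mul, ← prod_pow]
  simp only [energyNorm_pow hk]
  exact_mod_cast card_balancedTuples_pow_le_prod_energy B

lemma card_balancedTuples_ite_le {k : ℕ} (A B : Finset Z) {s : Finset (Fin k ⊕ Fin k)}
    (hs : #s = 2) :
    (#(balancedTuples fun i => if i ∈ s then B else A) : ℝ) ≤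
      energyNorm k B * energyNorm k A ^ (k - 1) := by
  have hsk : 2 ≤ k + k := hs ▸ (card_le_univ s).trans_eq (by simp)
  have hsc : #sᶜ = (k - 1) * 2 := by
    rw [card_compl, hs, Fintype.card_sum, Fintype.card_fin]
    omega
  have hB := energyNorm_nonneg k B
  have hA := energyNorm_nonneg k A
  rw [← pow_le_pow_iff_left₀ (by positivity) (by positivity) two_ne_zero]
  calc _ ≤ ∏ i, energyNorm k (if i ∈ s then B else A) :=
        card_balancedTuples_sq_le_prod_energyNorm (by omega) _
    _ = energyNorm k B ^ #s * energyNorm k A ^ #sᶜ := by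
        simp only [apply_ite, prod_ite, prod_const, filter_mem_eq_inter, univ_inter,
          filter_notMem_eq_sdiff, compl_eq_univ_sdiff]
    _ = _ := by rw [hs, hsc, mul_pow, pow_mul]

end Holder

section Repeats

variable {M Z J : Type*} [AddCommMonoid M] [DecidableEq M] [AddCommGroup Z] [DecidableEq Z] {k : ℕ}
  {A B : Finset M} {w : M → J}

/-- Every balanced tuple from `A` has two entries at different positions with the same label
under `w`. -/
def RepeatsOnBalanced (k : ℕ) (A : Finset M) (w : M → J) : Prop :=
  ∀ x ∈ balancedTuples fun _ : Fin k ⊕ Fin k => A, ¬ (w ∘ x).Injective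

lemma RepeatsOnBalanced.mono (hw : RepeatsOnBalanced k A w) (hBA : B ⊆ A) :
    RepeatsOnBalanced k B w :=
  fun x hx => hw x (balancedTuples_mono (fun _ => hBA) hx)

lemma RepeatsOnBalanced.comp {J' : Type*} (hw : RepeatsOnBalanced k A w) (g : J → J') :
    RepeatsOnBalanced k A (g ∘ w) :=
  fun x hx hinj => hw x hx (Function.Injective.of_comp (f := g) hinj)

lemma RepeatsOnBalanced.balancedTuples_subset [DecidableEq J] (hw : RepeatsOnBalanced k A w) :
    (balancedTuples fun _ => A) ⊆
      (powersetCard 2 (univ : Finset (Fin k ⊕ Fin k))).biUnion fun s =>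
        (A.image w).biUnion fun j =>
          balancedTuples fun i => if i ∈ s then {a ∈ A | w a = j} else A := by
  intro x hx
  obtain ⟨i, j, hij, hne⟩ := Function.not_injective_iff.mp (hw x hx)
  obtain ⟨hxA, hsum⟩ := mem_filter.mp hx
  rw [Fintype.mem_piFinset] at hxA
  refine mem_biUnion.mpr ⟨{i, j}, by simp [mem_powersetCard, card_pair hne],
    mem_biUnion.mpr ⟨w (x i), mem_image_of_mem _ (hxA i), mem_filter.mpr ⟨?_, hsum⟩⟩⟩
  refine Fintype.mem_piFinset.mpr fun l => ?_
  split_ifs with hl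
  · rcases mem_insert.mp hl with rfl | hl
    · exact mem_filter.mpr ⟨hxA l, rfl⟩
    · obtain rfl := mem_singleton.mp hl
      exact mem_filter.mpr ⟨hxA l, hij.symm⟩
  · exact hxA l

lemma RepeatsOnBalanced.energyNorm_le [DecidableEq J] {A : Finset Z} {w : Z → J} (hk : k ≠ 0)
    (hw : RepeatsOnBalanced k A w) :
    energyNorm k A ≤ (2 * k).choose 2 * ∑ j ∈ A.image w, energyNorm k {a ∈ A | w a = j} := by
  let level (j : J) : Finset Z := {a ∈ A | w a = j}
  let pairs := powersetCard 2 (univ : Finset (Fin k ⊕ Fin k))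
  have hpairs : #pairs = (2 * k).choose 2 := by simp [pairs, two_mul]
  have hmul : energyNorm k A ^ (k - 1) * energyNorm k A ≤ energyNorm k A ^ (k - 1) *
      ((2 * k).choose 2 * ∑ j ∈ A.image w, energyNorm k (level j)) :=
    calc _ = (energy k A : ℝ) := by rw [pow_sub_one_mul hk, energyNorm_pow hk]
      _ ≤ ∑ s ∈ pairs, ∑ j ∈ A.image w,
          (#(balancedTuples fun i => if i ∈ s then level j else A) : ℝ) := by
        exact_mod_cast (card_le_card hw.balancedTuples_subset).trans <|
          card_biUnion_le.trans <| sum_le_sum fun _ _ => card_biUnion_le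
      _ ≤ ∑ _s ∈ pairs, ∑ j ∈ A.image w, energyNorm k (level j) * energyNorm k A ^ (k - 1) :=
        sum_le_sum fun s hs => sum_le_sum fun j _ =>
          card_balancedTuples_ite_le A (level j) (mem_powersetCard.mp hs).2
      _ = _ := by
        rw [sum_const, hpairs, nsmul_eq_mul, ← sum_mul]
        ring
  rcases (energyNorm_nonneg k A).eq_or_lt with h0 | hpos
  · rw [← h0]
    exact mul_nonneg (Nat.cast_nonneg _) (sum_nonneg fun j _ => energyNorm_nonneg k _)
  · exact le_of_mul_le_mul_left hmul (pow_pos hpos _)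

end Repeats

section Rank

variable {X V W 𝕜 : Type*}

/-- At most `m` elements of `A` have the same image under `f`. -/
def FibersCardLE (f : X → V) (A : Finset X) (m : ℕ) : Prop :=
  ∀ B ⊆ A, (∀ x ∈ B, ∀ y ∈ B, f x = f y) → #B ≤ m

lemma FibersCardLE.mono {f : X → V} {A B : Finset X} {m : ℕ} (h : FibersCardLE f A m)
    (hBA : B ⊆ A) : FibersCardLE f B m :=
  fun C hC => h C (hC.trans hBA)

lemma FibersCardLE.of_image {Y : Type*} [DecidableEq X] {f : X → V} {g : Y → X}
    (hg : Function.Injective g) {A : Finset Y} {m : ℕ} (h : FibersCardLE f (A.image g) m) :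
    FibersCardLE (f ∘ g) A m := by
  intro B hBA hB
  rw [← card_image_of_injective B hg]
  refine h _ (image_subset_image hBA) ?_
  simpa using hB

variable [DivisionRing 𝕜] [AddCommGroup V] [Module 𝕜 V]

variable (𝕜) in
/-- The dimension of the affine span of `s`, the notion of rank in Freiman's lemma; it is `0` by
convention if that dimension is infinite. -/
noncomputable def affineRank (s : Set V) : ℕ := Module.finrank 𝕜 (vectorSpan 𝕜 s)

lemma affineRank_le_card_of_forall_sub_mem_span {s : Set V} {u : Finset V} {a : V} (ha : a ∈ s)
    (h : ∀ b ∈ s, b - a ∈ Submodule.span 𝕜 (u : Set V)) : affineRank 𝕜 s ≤ #u := by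
  have := FiniteDimensional.span_finset 𝕜 u
  refine (Submodule.finrank_mono ?_).trans (finrank_span_finset_le_card u)
  rw [vectorSpan_eq_span_vsub_set_right 𝕜 ha, Submodule.span_le]
  rintro _ ⟨b, hb, rfl⟩
  exact h b hb

variable [AddCommGroup W] [Module 𝕜 W]

lemma affineRank_lt_of_subset_of_map_eq {s t : Set V} (ht : t.Finite) (hst : s ⊆ t) (φ : V →ₗ[𝕜] W)
    (hs : ∀ u ∈ s, ∀ v ∈ s, φ u = φ v) {u v : V} (hu : u ∈ t) (hv : v ∈ t) (huv : φ u ≠ φ v) :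
    affineRank 𝕜 s < affineRank 𝕜 t := by
  have := finiteDimensional_vectorSpan_of_finite 𝕜 ht
  refine Submodule.finrank_lt_finrank_of_lt ((vectorSpan_mono 𝕜 hst).lt_of_not_ge fun hle => ?_)
  have hker : vectorSpan 𝕜 s ≤ LinearMap.ker φ := by
    rw [vectorSpan_def, Submodule.span_le]
    rintro _ ⟨x, hx, y, hy, rfl⟩
    simp [hs x hx y hy]
  have hmem := hker (hle (vsub_mem_vectorSpan 𝕜 hu hv))
  rw [vsub_eq_sub, LinearMap.mem_ker, map_sub, sub_eq_zero] at hmem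
  exact huv hmem

lemma affineRank_image_filter_lt [DecidableEq W] {f : X → V} {A : Finset X} {x y : X} (hx : x ∈ A)
    (hy : y ∈ A) (φ : V →ₗ[𝕜] W) (hφ : φ (f x) ≠ φ (f y)) (j : W) :
    affineRank 𝕜 (f '' ({a ∈ A | φ (f a) = j} : Finset X)) < affineRank 𝕜 (f '' A) := by
  refine affineRank_lt_of_subset_of_map_eq (A.finite_toSet.image f)
    (Set.image_mono (coe_subset.mpr (filter_subset _ _))) φ ?_
    (Set.mem_image_of_mem f hx) (Set.mem_image_of_mem f hy) hφ
  rintro _ ⟨u, hu, rfl⟩ _ ⟨v, hv, rfl⟩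
  exact (mem_filter.mp hu).2.trans (mem_filter.mp hv).2.symm

lemma energyNorm_le_of_affineRank_le {Z : Type*} [AddCommGroup Z] [DecidableEq Z] {k d m : ℕ}
    (hk : k ≠ 0) {f : Z → V} {A : Finset Z}
    (hsep : ∀ x ∈ A, ∀ y ∈ A, f x ≠ f y →
      ∃ φ : V →ₗ[𝕜] W, φ (f x) ≠ φ (f y) ∧ RepeatsOnBalanced k A (φ ∘ f))
    (hm : FibersCardLE f A m) (hd : affineRank 𝕜 (f '' A) ≤ d) :
    energyNorm k A ≤ m * (2 * k).choose 2 ^ d * #A := by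
  classical
  induction d using Nat.strong_induction_on generalizing A with
  | _ d ih =>
  by_cases hconst : ∀ x ∈ A, ∀ y ∈ A, f x = f y
  · have hC : 0 < (2 * k).choose 2 := Nat.choose_pos (by omega)
    refine energyNorm_le_mul_card hk (n := (m : ℝ) * (2 * k).choose 2 ^ d) ?_
    exact_mod_cast (hm A subset_rfl hconst).trans (Nat.le_mul_of_pos_right _ (Nat.pow_pos hC))
  push Not at hconst
  obtain ⟨x, hx, y, hy, hxy⟩ := hconst
  obtain ⟨φ, hφ, hrep⟩ := hsep x hx y hy hxy
  have hlt := affineRank_image_filter_lt hx hy φ hφ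
  obtain ⟨e, rfl⟩ := Nat.exists_eq_succ_of_ne_zero (n := d) (by have := hlt 0; omega)
  have hlevel (j : W) : energyNorm k {a ∈ A | φ (f a) = j} ≤
      m * (2 * k).choose 2 ^ e * #{a ∈ A | φ (f a) = j} := by
    have hsub : {a ∈ A | φ (f a) = j} ⊆ A := filter_subset _ _
    refine ih e e.lt_succ_self (fun x hx y hy hxy => ?_) (hm.mono hsub) ?_
    · obtain ⟨ψ, hψ, h⟩ := hsep x (hsub hx) y (hsub hy) hxy
      exact ⟨ψ, hψ, h.mono hsub⟩
    · have := hlt j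
      omega
  calc energyNorm k A
      ≤ (2 * k).choose 2 * ∑ j ∈ A.image (φ ∘ f), energyNorm k {a ∈ A | φ (f a) = j} :=
        hrep.energyNorm_le hk
    _ ≤ (2 * k).choose 2 * ∑ j ∈ A.image (φ ∘ f),
          m * (2 * k).choose 2 ^ e * (#{a ∈ A | φ (f a) = j} : ℝ) := by
        gcongr with j
        exact hlevel j
    _ = m * (2 * k).choose 2 ^ (e + 1) * #A := by
        rw [← mul_sum, card_eq_sum_card_image (φ ∘ f) A]
        push_cast
        simp only [Function.comp_apply]
        ring

end Rank

section Freiman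

variable {X G V 𝕜 : Type*}

lemma card_add_card_mul_self_le [Mul G] [DecidableEq G] {A N B : Finset G} (hN : N ⊆ A * A)
    (hBA : B ⊆ A) (hdisj : Disjoint N (B * B)) : #N + #(B * B) ≤ #(A * A) := by
  rw [← card_union_of_disjoint hdisj]
  exact card_le_card (union_subset hN (mul_subset_mul hBA hBA))

variable [LinearOrder V]

lemma image_eq_insert_image_filter_lt {f : X → V} {A : Finset X} {a : X} (ha : a ∈ A)
    (hmin : ∀ b ∈ A, f a ≤ f b) :
    f '' A = insert (f a) (f '' ({b ∈ A | f a < f b} : Finset X)) := by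
  refine Set.Subset.antisymm ?_ (Set.insert_subset (Set.mem_image_of_mem f ha)
    (Set.image_mono (coe_subset.mpr (filter_subset _ _))))
  rintro _ ⟨b, hb, rfl⟩
  rcases (hmin b hb).eq_or_lt with hab | hab
  · exact .inl hab.symm
  · exact .inr ⟨b, mem_filter.mpr ⟨hb, hab⟩, rfl⟩

variable [AddCommGroup V] [IsOrderedAddMonoid V] [DivisionRing 𝕜] [Module 𝕜 V]

-- The positive differences `f b - f a` are sums of indecomposable ones, which therefore span. `T`
-- is a basis consisting of indecomposables.
lemma exists_indecomposable_subset {f : X → V} {A : Finset X} {a : X} (ha : a ∈ A)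
    (hmin : ∀ b ∈ A, f a ≤ f b) :
    ∃ T ⊆ {b ∈ A | f a < f b}, Set.InjOn f T ∧ affineRank 𝕜 (f '' A) ≤ #T ∧
      ∀ t ∈ T, ∀ u ∈ A, ∀ v ∈ A, f a < f u → f a < f v → f u + f v ≠ f a + f t := by
  classical
  let w (x : A) : V := f x - f a
  let I : Set A := IsAddIndecomposable.baseOf w (AddMonoidHom.id V)
  obtain ⟨T, hTI, -, hspan, hT⟩ :=
    exists_linearIndepOn_extension (linearIndepOn_empty 𝕜 w) I.empty_subset
  have hpos {x : A} (hx : x ∈ T) : f a < f x := by simpa [w] using (hTI hx).1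
  have hfinj {x y : A} (hx : x ∈ T) (hy : y ∈ T) (hxy : f x = f y) : x = y :=
    hT.injOn hx hy (by simp [w, hxy])
  refine ⟨(Set.toFinset T).map (.subtype _), fun x hx => ?_, ?_, ?_, ?_⟩
  · obtain ⟨t, ht, rfl⟩ := mem_map.mp hx
    exact mem_filter.mpr ⟨t.2, hpos (Set.mem_toFinset.mp ht)⟩
  · simp only [coe_map, Set.coe_toFinset]
    rintro _ ⟨x, hx, rfl⟩ _ ⟨y, hy, rfl⟩ hxy
    exact congrArg _ (hfinj hx hy hxy)
  · refine (affineRank_le_card_of_forall_sub_mem_span (u := (w '' T).toFinset)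
      (Set.mem_image_of_mem f ha) ?_).trans ?_
    · rintro _ ⟨b, hb, rfl⟩
      rw [Set.coe_toFinset]
      rcases (hmin b hb).eq_or_lt with hab | hab
      · simp [hab]
      have hmem : w ⟨b, hb⟩ ∈ AddSubmonoid.closure (w '' I) := by
        rw [AddSubmonoid.closure_image_isAddIndecomposable_baseOf]
        exact AddSubmonoid.subset_closure ⟨_, by simpa [w] using hab, rfl⟩
      exact (AddSubmonoid.closure_le
        (S := (Submodule.span 𝕜 (w '' T)).toAddSubmonoid)).mpr hspan hmem
    · rw [Set.toFinset_image, card_map]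
      exact card_image_le
  · intro x hx u hu v hv hau hav huv
    obtain ⟨t, ht, rfl⟩ := mem_map.mp hx
    have := (hTI (Set.mem_toFinset.mp ht)).2 ⟨u, hu⟩ (by simpa [w] using hau) ⟨v, hv⟩
      (by simpa [w] using hav) (by
        simp only [w]
        rw [sub_add_sub_comm, huv]
        exact (add_sub_add_left_eq_sub _ _ _).symm)
    simp only [w, sub_eq_zero] at this
    exact this.elim hau.ne' hav.ne'

variable [Mul G] [DecidableEq G] {f : G → V} {A : Finset G} {a : G}

lemma card_minFiber_mul_le [IsRightCancelMul G] (hf : ∀ x y, f (x * y) = f x + f y) (ha : a ∈ A)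
    (hmin : ∀ b ∈ A, f a ≤ f b) :
    #{b ∈ A | f b = f a} * (affineRank 𝕜 (f '' A) + 1) +
      #({b ∈ A | f a < f b} * {b ∈ A | f a < f b}) ≤ #(A * A) := by
  obtain ⟨T, hTB, hTinj, hrank, hT⟩ := exists_indecomposable_subset (𝕜 := 𝕜) ha hmin
  have hTA : insert a T ⊆ A := insert_subset ha (hTB.trans (filter_subset _ _))
  have haT : a ∉ T := fun h => (mem_filter.mp (hTB h)).2.false
  have hinj : Set.InjOn f (insert a T : Finset G) := by
    rw [coe_insert, Set.injOn_insert (by simpa using haT)]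
    refine ⟨hTinj, ?_⟩
    rintro ⟨t, ht, hta⟩
    exact (mem_filter.mp (hTB ht)).2.ne' hta
  have hcard : #({b ∈ A | f b = f a} * insert a T) = #{b ∈ A | f b = f a} * (#T + 1) := by
    rw [← card_insert_of_notMem haT, card_mul_iff]
    rintro ⟨x, t⟩ hx ⟨y, u⟩ hy hxy
    simp only [Set.mem_prod, mem_coe, mem_filter] at hx hy hxy
    have hfxy := congrArg f hxy
    simp only [hf, hx.1.2, hy.1.2, add_right_inj] at hfxy
    obtain rfl := hinj hx.2 hy.2 hfxy
    simp [mul_right_cancel hxy]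
  calc _ ≤ #({b ∈ A | f b = f a} * insert a T) + _ := by
        rw [hcard]
        gcongr
    _ ≤ #(A * A) := by
        refine card_add_card_mul_self_le (mul_subset_mul (filter_subset _ _) hTA)
          (filter_subset _ _) (disjoint_left.mpr fun z hz hzB => ?_)
        obtain ⟨x, hx, t, ht, rfl⟩ := mem_mul.mp hz
        obtain ⟨u, hu, v, hv, huv⟩ := mem_mul.mp hzB
        obtain ⟨huA, hau⟩ := mem_filter.mp hu
        obtain ⟨hvA, hav⟩ := mem_filter.mp hv
        have hfuv : f u + f v = f a + f t := by rw [← hf, huv, hf, (mem_filter.mp hx).2]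
        rcases mem_insert.mp ht with rfl | ht
        · exact (add_lt_add hau hav).ne' hfuv
        · exact hT t ht u huA v hvA hau hav hfuv

lemma card_add_card_mul_le_of_notMem_affineSpan [IsLeftCancelMul G]
    (hf : ∀ x y, f (x * y) = f x + f y) (ha : a ∈ A)
    (hmin : ∀ b ∈ A, f a ≤ f b)
    (hspan : f a ∉ affineSpan 𝕜 (f '' ({b ∈ A | f a < f b} : Finset G))) :
    #A + #({b ∈ A | f a < f b} * {b ∈ A | f a < f b}) ≤ #(A * A) := by
  rw [← card_singleton_mul a A]
  refine card_add_card_mul_self_le (mul_subset_mul_right (singleton_subset_iff.mpr ha))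
    (filter_subset _ _) (disjoint_left.mpr fun z hz hzB => ?_)
  obtain ⟨_, ha', b, hb, rfl⟩ := mem_mul.mp hz
  obtain ⟨u, hu, v, hv, huv⟩ := mem_mul.mp hzB
  rw [mem_singleton.mp ha'] at huv
  have hfuv : f u + f v = f a + f b := by rw [← hf, huv, hf]
  rcases (hmin b hb).eq_or_lt with hab | hab
  · rw [← hab] at hfuv
    exact (add_lt_add (mem_filter.mp hu).2 (mem_filter.mp hv).2).ne' hfuv
  · have hfa : f a = (f u -ᵥ f b) +ᵥ f v := by
      rw [vsub_eq_sub, vadd_eq_add, sub_add_eq_add_sub, hfuv, add_sub_cancel_right]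
    exact hspan <| Set.mem_of_eq_of_mem hfa <|
      vadd_mem_affineSpan_of_mem_affineSpan_of_mem_vectorSpan
        (subset_affineSpan 𝕜 _ (Set.mem_image_of_mem f hv)) (vsub_mem_vectorSpan 𝕜
          (Set.mem_image_of_mem f hu) (Set.mem_image_of_mem f (mem_filter.mpr ⟨hb, hab⟩)))

-- Freiman's lemma, by removing the elements of `A` with minimal image. If the rank stays at least
-- `d`, their products with an indecomposable basis are new; otherwise the products of `A` with one
-- removed element are.
lemma mul_card_le_card_mul_self_add [IsCancelMul G] (hf : ∀ x y, f (x * y) = f x + f y)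
    {m d : ℕ} (hm : FibersCardLE f A m) (hd : d ≤ affineRank 𝕜 (f '' A)) :
    (d + 1) * #A ≤ #(A * A) + m * (d + 1).choose 2 := by
  induction A using Finset.strongInduction generalizing d with
  | H A ih =>
  rcases A.eq_empty_or_nonempty with rfl | hA
  · simp
  obtain ⟨a, ha, hmin⟩ := exists_min_image A f hA
  set F : Finset G := {b ∈ A | f b = f a}
  set B : Finset G := {b ∈ A | f a < f b}
  have hBA : B ⊂ A := filter_ssubset.mpr ⟨a, ha, lt_irrefl _⟩
  have hcard : #A = #F + #B := by
    rw [← card_filter_add_card_filter_not fun b => f b = f a]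
    congr 2
    exact filter_congr fun b hb => ⟨fun h => (hmin b hb).lt_of_ne' h, fun h => h.ne'⟩
  have himage : f '' A = insert (f a) (f '' B) := image_eq_insert_image_filter_lt ha hmin
  by_cases hdB : d ≤ affineRank 𝕜 (f '' B)
  · have hnew := card_minFiber_mul_le (𝕜 := 𝕜) hf ha hmin
    have hrec := ih B hBA (hm.mono hBA.subset) hdB
    have : #F * (d + 1) ≤ #F * (affineRank 𝕜 (f '' A) + 1) := by gcongr
    rw [hcard]
    linarith
  · have hinsert : affineRank 𝕜 (f '' A) ≤ affineRank 𝕜 (f '' B) + 1 := by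
      have := finiteDimensional_vectorSpan_of_finite 𝕜 (B.finite_toSet.image f)
      rw [himage]
      exact finrank_vectorSpan_insert_le_set 𝕜 _ _
    have hspan : f a ∉ affineSpan 𝕜 (f '' B) := fun h => by
      rw [himage, affineRank, vectorSpan_insert_eq_vectorSpan h] at hd
      exact hdB hd
    obtain ⟨e, rfl⟩ := Nat.exists_eq_succ_of_ne_zero (n := d) (by omega)
    have hnew := card_add_card_mul_le_of_notMem_affineSpan hf ha hmin hspan
    have hrec := ih B hBA (hm.mono hBA.subset) (d := e) (by omega)
    have hFm : (e + 1) * #F ≤ (e + 1) * m := by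
      gcongr
      exact hm F (filter_subset _ _) fun x hx y hy =>
        (mem_filter.mp hx).2.trans (mem_filter.mp hy).2.symm
    have hchoose : (e + 2).choose 2 = (e + 1) + (e + 1).choose 2 := by
      rw [Nat.choose_succ_succ', Nat.choose_one_right]
    rw [Nat.succ_eq_add_one, add_assoc, one_add_one_eq_two, hchoose]
    rw [hcard] at hnew ⊢
    linarith

end Freiman

section Nonarchimedean

variable {R M : Type*} [LinearOrder R] [AddCommGroup M] {f : M → R}

lemma not_injOn_of_isNonarchimedean_of_sum_eq_zero {ι : Type*}
    (hf : IsNonarchimedean f) (hneg : ∀ a, f a = f (-a)) {s : Finset ι} (hs : s.Nonempty)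
    {l : ι → M} (hl : ∀ i ∈ s, f 0 < f (l i)) (hsum : ∑ i ∈ s, l i = 0) :
    ¬ Set.InjOn (f ∘ l) s := by
  intro hinj
  obtain ⟨i, hi, hmax⟩ := exists_max_image s (f ∘ l) hs
  have hlt (j) (hj : j ∈ s) (hji : j ≠ i) : f (l j) < f (l i) :=
    (hmax j hj).lt_of_ne fun h => hji (hinj hj hi h)
  have := hf.apply_sum_eq_of_lt hneg hi hlt
  rw [hsum] at this
  exact (hl i hi).ne this

lemma repeatsOnBalanced_of_isNonarchimedean [DecidableEq M]
    (hf : IsNonarchimedean f) (hneg : ∀ a, f a = f (-a)) {k : ℕ} (hk : k ≠ 0) {A : Finset M}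
    (hA : ∀ a ∈ A, f 0 < f a) : RepeatsOnBalanced k A f := by
  intro x hx hinj
  obtain ⟨hxA, hsum⟩ := mem_filter.mp hx
  rw [Fintype.mem_piFinset] at hxA
  let l : Fin k ⊕ Fin k → M := Sum.elim (x ∘ .inl) (-(x ∘ .inr))
  have hl : f ∘ l = f ∘ x := by
    ext i
    rcases i with i | i <;> simp [l, ← hneg]
  have : Nonempty (Fin k) := ⟨⟨0, by omega⟩⟩
  refine not_injOn_of_isNonarchimedean_of_sum_eq_zero hf hneg (s := univ)
    univ_nonempty (l := l) (fun i _ => ?_) ?_ (hl ▸ hinj.injOn)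
  · exact (hA _ (hxA i)).trans_eq (congrFun hl i).symm
  · simp [l, Fintype.sum_sum_type, hsum]

end Nonarchimedean

section Rational

lemma abs_eq_of_forall_padicValRat_eq {x y : ℚ} (hx : x ≠ 0) (hy : y ≠ 0)
    (h : ∀ p : ℕ, p.Prime → padicValRat p x = padicValRat p y) : |x| = |y| := by
  have hcross : x.num.natAbs * y.den = y.num.natAbs * x.den := by
    have hx' := Int.natAbs_ne_zero.mpr (Rat.num_ne_zero.mpr hx)
    have hy' := Int.natAbs_ne_zero.mpr (Rat.num_ne_zero.mpr hy)
    rw [Nat.eq_iff_prime_padicValNat_eq _ _ (mul_ne_zero hx' y.den_ne_zero)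
      (mul_ne_zero hy' x.den_ne_zero)]
    intro p hp
    have := Fact.mk hp
    have hval := h p hp
    rw [padicValRat, padicValRat, padicValInt, padicValInt] at hval
    rw [padicValNat.mul hx' y.den_ne_zero, padicValNat.mul hy' x.den_ne_zero]
    omega
  rw [Rat.abs_def, Rat.abs_def, Rat.divInt_eq_div, Rat.divInt_eq_div,
    div_eq_div_iff (by simp) (by simp)]
  exact_mod_cast hcross

/-- The vector of `p`-adic valuations of `x`. Coordinates lie in `ℚ` to make the target a vector
space, which is ordered lexicographically since Freiman's lemma needs a translation-invariant linear
order. -/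
def valuationVector (x : ℚ) : Lex ({p : ℕ // p.Prime} → ℚ) := toLex fun p => (padicValRat p x : ℚ)

lemma valuationVector_mul {x y : ℚ} (hx : x ≠ 0) (hy : y ≠ 0) :
    valuationVector (x * y) = valuationVector x + valuationVector y := by
  refine funext fun p => ?_
  have : Fact (p : ℕ).Prime := ⟨p.2⟩
  exact (congrArg Int.cast (padicValRat.mul hx hy)).trans (Int.cast_add _ _)

lemma fibersCardLE_valuationVector {A : Finset ℚ} (hA : 0 ∉ A) :
    FibersCardLE valuationVector A 2 := by
  intro B hBA hB
  rcases B.eq_empty_or_nonempty with rfl | ⟨b, hb⟩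
  · simp
  refine (card_le_card fun x hx => ?_).trans (card_le_two (a := b) (b := -b))
  have hxb : |x| = |b| := abs_eq_of_forall_padicValRat_eq (ne_of_mem_of_not_mem (hBA hx) hA)
    (ne_of_mem_of_not_mem (hBA hb) hA) fun p hp =>
      Int.cast_injective (congrFun (hB x hx b hb) ⟨p, hp⟩)
  simpa using abs_eq_abs.mp hxb

lemma mul_card_le_card_mul_self_add_of_le_affineRank {A : Finset ℚ} (hA : 0 ∉ A) {d : ℕ}
    (hd : d ≤ affineRank ℚ (valuationVector '' A)) :
    (d + 1) * #A ≤ #(A * A) + 2 * (d + 1).choose 2 := by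
  have hfib := fibersCardLE_valuationVector hA
  lift A to Finset ℚˣ using fun x hx => isUnit_iff_ne_zero.mpr (ne_of_mem_of_not_mem hx hA)
  have himage : (A * A).image (Units.val : ℚˣ → ℚ) = A.image Units.val * A.image Units.val :=
    image_mul (Units.coeHom ℚ)
  rw [← himage, card_image_of_injective _ Units.val_injective,
    card_image_of_injective _ Units.val_injective]
  rw [coe_image, Set.image_image] at hd
  have hmul (u v : ℚˣ) : (valuationVector ∘ Units.val) (u * v) =
      (valuationVector ∘ Units.val) u + (valuationVector ∘ Units.val) v :=
    valuationVector_mul u.ne_zero v.ne_zero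
  exact mul_card_le_card_mul_self_add hmul (hfib.of_image Units.val_injective) hd

lemma repeatsOnBalanced_padicValRat (p : ℕ) [Fact p.Prime] {k : ℕ} (hk : k ≠ 0) {A : Finset ℚ}
    (hA : 0 ∉ A) : RepeatsOnBalanced k A (padicValRat p) := by
  have h0 {a : ℚ} (ha : a ∈ A) : a ≠ 0 := ne_of_mem_of_not_mem ha hA
  intro x hx hinj
  have hxA := Fintype.mem_piFinset.mp (mem_filter.mp hx).1
  refine repeatsOnBalanced_of_isNonarchimedean (f := padicNorm p)
    (fun _ _ => padicNorm.nonarchimedean) (fun a => (padicNorm.neg a).symm) hk (A := A)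
    (fun a ha => ?_) x hx fun i j hij => hinj ?_
  · rw [padicNorm.zero]
    exact (padicNorm.nonneg a).lt_of_ne' (padicNorm.nonzero (h0 ha))
  · have hp : (1 : ℚ) < p := mod_cast (Fact.out : p.Prime).one_lt
    simp only [Function.comp_apply, padicNorm.eq_zpow_of_nonzero (h0 (hxA _))] at hij
    exact neg_injective (zpow_right_injective₀ (by positivity) hp.ne' hij)

lemma energyNorm_le_of_affineRank_valuationVector_le {k d : ℕ} (hk : k ≠ 0) {A : Finset ℚ}
    (hA : 0 ∉ A) (hd : affineRank ℚ (valuationVector '' A) ≤ d) :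
    energyNorm k A ≤ 2 * (2 * k).choose 2 ^ d * #A := by
  refine energyNorm_le_of_affineRank_le (𝕜 := ℚ) (W := ℚ) (m := 2) hk (fun x _ y _ hxy => ?_)
    (fibersCardLE_valuationVector hA) hd
  obtain ⟨p, hp⟩ := Function.ne_iff.mp hxy
  have : Fact (p : ℕ).Prime := ⟨p.2⟩
  exact ⟨LinearMap.proj p ∘ₗ (ofLexLinearEquiv ℚ ({p : ℕ // p.Prime} → ℚ)).toLinearMap, hp,
    (repeatsOnBalanced_padicValRat p hk hA).comp Int.cast⟩

lemma mul_add_one_le_six_pow (n : ℕ) : n * (n + 1) ≤ 6 ^ n := by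
  induction n with
  | zero => simp
  | succ n ih =>
    rw [pow_succ]
    have := n.lt_pow_self (show 1 < 6 by norm_num)
    nlinarith

lemma energyNorm_le_of_card_mul_self_le {k K : ℕ} (hk : 2 ≤ k) {A : Finset ℚ} (hA : 0 ∉ A)
    (hAA : #(A * A) ≤ K * #A) : energyNorm k A ≤ ((2 * k).choose 2 : ℝ) ^ K * #A := by
  have hC : 6 ≤ (2 * k).choose 2 := Nat.choose_le_choose 2 (show 4 ≤ 2 * k by omega)
  have hC6 : (6 : ℝ) ≤ (2 * k).choose 2 := mod_cast hC
  rcases lt_or_ge (affineRank ℚ (valuationVector '' A)) K with hlt | hge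
  · calc energyNorm k A ≤ 2 * (2 * k).choose 2 ^ (K - 1) * #A :=
          energyNorm_le_of_affineRank_valuationVector_le (by omega) hA (Nat.le_sub_one_of_lt hlt)
      _ ≤ (2 * k).choose 2 * (2 * k).choose 2 ^ (K - 1) * #A := by
          gcongr
          linarith
      _ = (2 * k).choose 2 ^ K * #A := by rw [mul_pow_sub_one (by omega)]
  · have hcard : #A ≤ (2 * k).choose 2 ^ K :=
      calc #A ≤ K * (K + 1) := by
            have := mul_card_le_card_mul_self_add_of_le_affineRank hA hge
            have : (K + 1).choose 2 * 2 = (K + 1) * K := by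
              rw [Nat.choose_two_right, Nat.add_sub_cancel,
                Nat.div_mul_cancel (by simpa using (Nat.even_mul_pred_self (K + 1)).two_dvd)]
            linarith
        _ ≤ 6 ^ K := mul_add_one_le_six_pow K
        _ ≤ _ := Nat.pow_le_pow_left hC K
    exact energyNorm_le_mul_card (by omega) (mod_cast hcard)

end Rational

theorem chang_sumset_bound
    (A : Finset ℚ) (hA0 : (0 : ℚ) ∉ A)
    (K : ℕ) (hK : 0 < K) (hAA : (A * A).card ≤ K * A.card)
    (k : ℕ) (hk : 2 ≤ k) :
    (A.card : ℝ) ^ k / (2 * (k : ℝ) ^ 2 - (k : ℝ)) ^ (k * K) ≤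
      ((kfoldSum k A).card : ℝ) := by
  have hC : 2 * (k : ℝ) ^ 2 - k = (2 * k).choose 2 := by
    rw [Nat.cast_choose_two]
    push_cast
    ring
  have hCpos : 0 < (2 * k).choose 2 := Nat.choose_pos (by omega)
  rcases A.eq_empty_or_nonempty with rfl | hA
  · simp [show k ≠ 0 by omega]
  have henergy : (energy k A : ℝ) ≤ (2 * k).choose 2 ^ (k * K) * #A ^ k := by
    rw [← energyNorm_pow (by omega), mul_comm k, pow_mul, ← mul_pow]
    exact pow_le_pow_left₀ (energyNorm_nonneg k A)
      (energyNorm_le_of_card_mul_self_le hk hA0 hAA) k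
  rw [hC, div_le_iff₀ (by positivity)]
  refine le_of_mul_le_mul_right ?_ (pow_pos (Nat.cast_pos.mpr hA.card_pos) k)
  calc (#A : ℝ) ^ k * #A ^ k ≤ #(kfoldSum k A) * energy k A := by
        rw [← sq]
        exact_mod_cast card_pow_sq_le_card_image_sum_mul_energy k A
    _ ≤ #(kfoldSum k A) * ((2 * k).choose 2 ^ (k * K) * #A ^ k) := by gcongr
    _ = _ := (mul_assoc _ _ _).symm
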